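/- arXiv:2001.00410 — 2 statements merged into one kernel-verified Lean document; each statement's English description precedes it below -/
import Mathlib

section
/- Let n ≥ 1 and let f : ℝⁿ → ℝ be a nonnegative, continuous, compactly supported function with ∫_{ℝⁿ} f dx = 1, and let u(t,x) = ∫_{ℝⁿ} (4πt)^{-n/2} exp(-‖x-y‖²/(4t)) f(y) dy. Then lim_{t→∞} ( H(u(t)) - (n/2) log(4πe t) ) = 0; equivalently, lim_{t→∞} N(u(t))/t = 4πe, where N(u(t)) = exp((2/n) H(u(t))). -/
open Real MeasureTheory Filter

/-- The heat semigroup solution on `ℝⁿ` with initial datum `f`. -/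
noncomputable def heatSol (n : ℕ) (f : EuclideanSpace ℝ (Fin n) → ℝ)
    (t : ℝ) (x : EuclideanSpace ℝ (Fin n)) : ℝ :=
  ∫ y, (4 * π * t) ^ (-(n : ℝ) / 2) * Real.exp (-‖x - y‖ ^ 2 / (4 * t)) * f y

/-- The Boltzmann–Shannon entropy of the heat solution at time `t`. -/
noncomputable def shannonEntropy (n : ℕ) (f : EuclideanSpace ℝ (Fin n) → ℝ) (t : ℝ) : ℝ :=
  -∫ x, heatSol n f t x * Real.log (heatSol n f t x)

/-- The Shannon entropy power of the heat solution at time `t`. -/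
noncomputable def entropyPower (n : ℕ) (f : EuclideanSpace ℝ (Fin n) → ℝ) (t : ℝ) : ℝ :=
  Real.exp ((2 / (n : ℝ)) * shannonEntropy n f t)

/-- Rescaled heat solution (without normalising constant). -/
noncomputable def phiResc (n : ℕ) (f : EuclideanSpace ℝ (Fin n) → ℝ) (r : ℝ)
    (z : EuclideanSpace ℝ (Fin n)) : ℝ :=
  ∫ y, Real.exp (-‖z - r • y‖ ^ 2 / 4) * f y

lemma gauss_zero (n : ℕ) {b : ℝ} (hb : 0 < b) :
    ∫ z : EuclideanSpace ℝ (Fin n), Real.exp (-b * ‖z‖ ^ 2) = (π / b) ^ ((n : ℝ) / 2) := by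
  simpa using GaussianFourier.integral_rexp_neg_mul_sq_norm (V := EuclideanSpace ℝ (Fin n)) hb

lemma gauss_two (n : ℕ) (hn : 1 ≤ n) {b : ℝ} (hb : 0 < b) :
    ∫ z : EuclideanSpace ℝ (Fin n), ‖z‖ ^ 2 * Real.exp (-b * ‖z‖ ^ 2)
      = (n / (2 * b)) * (π / b) ^ ((n : ℝ) / 2) := by
  have : NeZero n := ⟨by omega⟩
  have hn0 : (0 : ℝ) < n := by exact_mod_cast hn
  rw [← gauss_zero n hb]
  have h0 := integral_fun_norm_addHaar (volume : Measure (EuclideanSpace ℝ (Fin n)))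
    (fun r => Real.exp (-b * r ^ 2))
  have h2 := integral_fun_norm_addHaar (volume : Measure (EuclideanSpace ℝ (Fin n)))
    (fun r => r ^ 2 * Real.exp (-b * r ^ 2))
  simp only [finrank_euclideanSpace, Fintype.card_fin, smul_eq_mul, nsmul_eq_mul] at h0 h2
  rw [h0, h2]
  have e0 : ∫ y in Set.Ioi (0 : ℝ), y ^ (n - 1) * Real.exp (-b * y ^ 2)
      = b ^ (-(n : ℝ) / 2) * (1 / 2) * Real.Gamma ((n : ℝ) / 2) := by
    have := integral_rpow_mul_exp_neg_mul_rpow (p := 2) (q := (n : ℝ) - 1) (b := b)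
      (by norm_num) (by linarith) hb
    rw [sub_add_cancel] at this
    rw [← this]
    refine setIntegral_congr_fun measurableSet_Ioi (fun y hy => ?_)
    have : (n : ℝ) - 1 = ((n - 1 : ℕ) : ℝ) := by push_cast [hn]; ring
    simp only [this, rpow_natCast, Real.rpow_two]
  have e2 : ∫ y in Set.Ioi (0 : ℝ), y ^ (n - 1) * (y ^ 2 * Real.exp (-b * y ^ 2))
      = b ^ (-(n : ℝ) / 2 - 1) * (1 / 2) * Real.Gamma ((n : ℝ) / 2 + 1) := by
    have := integral_rpow_mul_exp_neg_mul_rpow (p := 2) (q := (n : ℝ) + 1) (b := b)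
      (by norm_num) (by linarith) hb
    rw [show -((n : ℝ) + 1 + 1) / 2 = -(n : ℝ) / 2 - 1 by ring,
      show ((n : ℝ) + 1 + 1) / 2 = (n : ℝ) / 2 + 1 by ring] at this
    rw [← this]
    refine setIntegral_congr_fun measurableSet_Ioi (fun y hy => ?_)
    have h1 : (n : ℝ) + 1 = ((n + 1 : ℕ) : ℝ) := by push_cast; ring
    have h3 : y ^ (n + 1) = y ^ (n - 1) * y ^ 2 := by
      rw [← pow_add]; congr 1; omega
    simp only [h1, rpow_natCast, Real.rpow_two, h3, mul_assoc]
  rw [e0, e2, Real.Gamma_add_one (by positivity), Real.rpow_sub_one hb.ne']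
  field_simp

lemma gauss_zero_integrable (n : ℕ) {b : ℝ} (hb : 0 < b) :
    Integrable (fun z : EuclideanSpace ℝ (Fin n) => Real.exp (-b * ‖z‖ ^ 2)) := by
  apply Integrable.of_integral_ne_zero
  rw [gauss_zero n hb]
  positivity

lemma gauss_two_integrable (n : ℕ) (hn : 1 ≤ n) {b : ℝ} (hb : 0 < b) :
    Integrable (fun z : EuclideanSpace ℝ (Fin n) => ‖z‖ ^ 2 * Real.exp (-b * ‖z‖ ^ 2)) := by
  apply Integrable.of_integral_ne_zero
  rw [gauss_two n hn hb]
  have hn0 : (0 : ℝ) < n := by exact_mod_cast hn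
  positivity

lemma heatSol_scale (n : ℕ) (f : EuclideanSpace ℝ (Fin n) → ℝ) {t : ℝ} (ht : 0 < t)
    (z : EuclideanSpace ℝ (Fin n)) :
    heatSol n f t (√t • z) = (4 * π * t) ^ (-(n : ℝ) / 2) * phiResc n f (√t)⁻¹ z := by
  unfold heatSol phiResc
  rw [← integral_const_mul]
  congr 1
  ext y
  have hs : 0 < √t := Real.sqrt_pos.2 ht
  have : √t • z - y = √t • (z - (√t)⁻¹ • y) := by
    rw [smul_sub, smul_smul, mul_inv_cancel₀ hs.ne', one_smul]
  rw [this, norm_smul, mul_pow, Real.norm_of_nonneg hs.le, Real.sq_sqrt ht.le, mul_assoc]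
  congr 3
  field_simp

lemma heatSol_integral (n : ℕ) (f : EuclideanSpace ℝ (Fin n) → ℝ)
    (hfi : Integrable f) (hf_int : ∫ x, f x = 1) {t : ℝ} (ht : 0 < t) :
    ∫ x, heatSol n f t x = 1 := by
  have hb : 0 < 1 / (4 * t) := by positivity
  have h := integral_convolution (μ := volume) (ν := volume) (ContinuousLinearMap.mul ℝ ℝ) hfi
    ((gauss_zero_integrable n hb).const_mul ((4 * π * t) ^ (-(n : ℝ) / 2)))
  rw [integral_const_mul, gauss_zero n hb, hf_int] at h
  have e : π / (1 / (4 * t)) = 4 * π * t := by field_simp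
  rw [e, neg_div] at h
  have hp : 0 < 4 * π * t := by positivity
  simp only [ContinuousLinearMap.mul_apply', one_mul] at h
  rw [← Real.rpow_add hp, neg_add_cancel, Real.rpow_zero] at h
  rw [← h]
  congr 1
  ext x
  unfold heatSol convolution
  congr 1
  ext y
  simp only [ContinuousLinearMap.mul_apply']
  rw [mul_comm (f y)]
  congr 3
  · ring
  · ring

section
variable {n : ℕ} {f : EuclideanSpace ℝ (Fin n) → ℝ}

lemma phi_integrand_integrable (hf_cont : Continuous f) (hf_supp : HasCompactSupport f)
    (r : ℝ) (z : EuclideanSpace ℝ (Fin n)) :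
    Integrable (fun y => Real.exp (-‖z - r • y‖ ^ 2 / 4) * f y) := by
  apply Continuous.integrable_of_hasCompactSupport (by fun_prop)
  exact hf_supp.mul_left

lemma phi_meas (hf_cont : Continuous f) (r : ℝ) : StronglyMeasurable (phiResc n f r) := by
  unfold phiResc
  have : Continuous (fun p : EuclideanSpace ℝ (Fin n) × EuclideanSpace ℝ (Fin n) =>
      Real.exp (-‖p.1 - r • p.2‖ ^ 2 / 4) * f p.2) := by fun_prop
  exact this.stronglyMeasurable.integral_prod_right'

/-- Two-sided bounds. -/
lemma phi_bounds (hf_cont : Continuous f) (hf_nonneg : ∀ x, 0 ≤ f x)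
    (hf_supp : HasCompactSupport f) (hf_int : ∫ x, f x = 1) {R : ℝ}
    (hR : ∀ y, f y ≠ 0 → ‖y‖ ≤ R) {r : ℝ} (hr0 : 0 ≤ r) (hr1 : r ≤ 1)
    (z : EuclideanSpace ℝ (Fin n)) :
    Real.exp (-(‖z‖ ^ 2 + R ^ 2) / 2) ≤ phiResc n f r z ∧ phiResc n f r z ≤ 1 ∧
    phiResc n f r z ≤ Real.exp (R ^ 2 / 4) * Real.exp (-(1 / 8) * ‖z‖ ^ 2) := by
  have hfi : Integrable f := hf_cont.integrable_of_hasCompactSupport hf_supp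
  have hi := phi_integrand_integrable hf_cont hf_supp r z
  have hc : ∀ c : ℝ, c = ∫ y, c * f y := fun c => by rw [integral_const_mul, hf_int, mul_one]
  have key : ∀ y, f y ≠ 0 → ‖r • y‖ ≤ R := fun y hy => by
    rw [norm_smul, Real.norm_of_nonneg hr0]
    nlinarith [hR y hy, norm_nonneg y]
  refine ⟨?_, ?_, ?_⟩
  · rw [hc (Real.exp _)]
    refine integral_mono (hfi.const_mul _) hi (fun y => ?_)
    by_cases hy : f y = 0
    · simp [hy]
    · refine mul_le_mul_of_nonneg_right (Real.exp_le_exp.2 ?_) (hf_nonneg y)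
      have h1 := norm_sub_le z (r • y)
      have h2 := key y hy
      have h3 := norm_nonneg (z - r • y)
      have h4 : ‖z - r • y‖ ^ 2 ≤ (‖z‖ + R) ^ 2 := by gcongr; linarith
      nlinarith [sq_nonneg (‖z‖ - R)]
  · rw [hc 1]
    refine integral_mono hi (hfi.const_mul _) (fun y => ?_)
    refine mul_le_mul_of_nonneg_right (Real.exp_le_one_iff.2 ?_) (hf_nonneg y)
    have := sq_nonneg ‖z - r • y‖
    linarith
  · rw [← Real.exp_add, hc (Real.exp _)]
    refine integral_mono hi (hfi.const_mul _) (fun y => ?_)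
    by_cases hy : f y = 0
    · simp [hy]
    · refine mul_le_mul_of_nonneg_right (Real.exp_le_exp.2 ?_) (hf_nonneg y)
      have h1 := norm_le_norm_sub_add z (r • y)
      have h2 := key y hy
      have h3 := norm_nonneg (z - r • y)
      have h4 : ‖z‖ ^ 2 ≤ (‖z - r • y‖ + R) ^ 2 := by gcongr; linarith
      nlinarith [sq_nonneg (‖z - r • y‖ - R)]

lemma phi_tendsto (hf_cont : Continuous f)
    (hf_supp : HasCompactSupport f) (hf_int : ∫ x, f x = 1)
    (z : EuclideanSpace ℝ (Fin n)) :
    Tendsto (fun r => phiResc n f r z) (nhds 0) (nhds (Real.exp (-‖z‖ ^ 2 / 4))) := by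
  have hfi : Integrable f := hf_cont.integrable_of_hasCompactSupport hf_supp
  have e : Real.exp (-‖z‖ ^ 2 / 4) = ∫ y, Real.exp (-‖z‖ ^ 2 / 4) * f y := by
    rw [integral_const_mul, hf_int, mul_one]
  rw [e]
  unfold phiResc
  refine tendsto_integral_filter_of_dominated_convergence (fun y => ‖f y‖) ?_ ?_ hfi.norm ?_
  · exact Eventually.of_forall fun r => (phi_integrand_integrable hf_cont hf_supp r z).1
  · refine Eventually.of_forall fun r => Eventually.of_forall fun y => ?_
    rw [norm_mul, Real.norm_of_nonneg (Real.exp_pos _).le]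
    refine mul_le_of_le_one_left (norm_nonneg _) (Real.exp_le_one_iff.2 ?_)
    have := sq_nonneg ‖z - r • y‖
    linarith
  · refine Eventually.of_forall fun y => ?_
    have : Continuous (fun r : ℝ => Real.exp (-‖z - r • y‖ ^ 2 / 4) * f y) := by fun_prop
    simpa using this.tendsto 0

lemma philog_bound (hf_cont : Continuous f) (hf_nonneg : ∀ x, 0 ≤ f x)
    (hf_supp : HasCompactSupport f) (hf_int : ∫ x, f x = 1) {R : ℝ}
    (hR : ∀ y, f y ≠ 0 → ‖y‖ ≤ R) {r : ℝ} (hr0 : 0 ≤ r) (hr1 : r ≤ 1)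
    (z : EuclideanSpace ℝ (Fin n)) :
    ‖phiResc n f r z * Real.log (phiResc n f r z)‖ ≤
      Real.exp (R ^ 2 / 4) / 2 * (‖z‖ ^ 2 * Real.exp (-(1 / 8) * ‖z‖ ^ 2)
        + R ^ 2 * Real.exp (-(1 / 8) * ‖z‖ ^ 2)) := by
  obtain ⟨h1, h2, h3⟩ := phi_bounds hf_cont hf_nonneg hf_supp hf_int hR hr0 hr1 z
  have hpos : 0 < phiResc n f r z := (Real.exp_pos _).trans_le h1
  have hlog := (Real.le_log_iff_exp_le hpos).2 h1
  have hlog0 := Real.log_nonpos hpos.le h2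
  rw [norm_mul, Real.norm_of_nonneg hpos.le, Real.norm_of_nonpos hlog0]
  calc _ ≤ (Real.exp (R ^ 2 / 4) * Real.exp (-(1 / 8) * ‖z‖ ^ 2)) * ((‖z‖ ^ 2 + R ^ 2) / 2) := by
        gcongr
        · linarith
        · linarith
    _ = _ := by ring

lemma philog_bound_integrable (hn : 1 ≤ n) (R : ℝ) :
    Integrable (fun z : EuclideanSpace ℝ (Fin n) =>
      Real.exp (R ^ 2 / 4) / 2 * (‖z‖ ^ 2 * Real.exp (-(1 / 8) * ‖z‖ ^ 2)
        + R ^ 2 * Real.exp (-(1 / 8) * ‖z‖ ^ 2))) :=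
  ((gauss_two_integrable n hn (by norm_num)).add
    ((gauss_zero_integrable n (by norm_num)).const_mul _)).const_mul _

lemma philog_meas (hf_cont : Continuous f) (r : ℝ) :
    AEStronglyMeasurable (fun z => phiResc n f r z * Real.log (phiResc n f r z)) := by
  have h := (phi_meas hf_cont r).measurable
  exact (h.mul h.log).aestronglyMeasurable

lemma philog_tendsto (hn : 1 ≤ n) (hf_cont : Continuous f) (hf_nonneg : ∀ x, 0 ≤ f x)
    (hf_supp : HasCompactSupport f) (hf_int : ∫ x, f x = 1) {R : ℝ}
    (hR : ∀ y, f y ≠ 0 → ‖y‖ ≤ R) :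
    Tendsto (fun t : ℝ => ∫ z, phiResc n f (√t)⁻¹ z * Real.log (phiResc n f (√t)⁻¹ z)) atTop
      (nhds (-((n : ℝ) / 2 * (4 * π) ^ ((n : ℝ) / 2)))) := by
  have e : -((n : ℝ) / 2 * (4 * π) ^ ((n : ℝ) / 2)) =
      ∫ z : EuclideanSpace ℝ (Fin n),
        Real.exp (-‖z‖ ^ 2 / 4) * Real.log (Real.exp (-‖z‖ ^ 2 / 4)) := by
    have h := gauss_two n hn (b := 1 / 4) (by norm_num)
    have e2 : ∀ z : EuclideanSpace ℝ (Fin n),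
        Real.exp (-‖z‖ ^ 2 / 4) * Real.log (Real.exp (-‖z‖ ^ 2 / 4))
        = (-1 / 4) * (‖z‖ ^ 2 * Real.exp (-(1 / 4) * ‖z‖ ^ 2)) := fun z => by
      rw [Real.log_exp, show -‖z‖ ^ 2 / 4 = -(1 / 4) * ‖z‖ ^ 2 by ring]; ring
    simp_rw [e2]
    rw [integral_const_mul, h, show π / (1 / 4) = 4 * π by ring]
    ring
  rw [e]
  have hr : Tendsto (fun t : ℝ => (√t)⁻¹) atTop (nhds 0) :=
    tendsto_inv_atTop_zero.comp Real.tendsto_sqrt_atTop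
  refine tendsto_integral_filter_of_dominated_convergence _ ?_ ?_
    (philog_bound_integrable hn R) ?_
  · exact Eventually.of_forall fun t => philog_meas hf_cont _
  · filter_upwards [eventually_ge_atTop 1] with t ht
    refine Eventually.of_forall fun z => ?_
    exact philog_bound hf_cont hf_nonneg hf_supp hf_int hR (by positivity)
      (inv_le_one_of_one_le₀ (Real.one_le_sqrt.2 ht)) z
  · refine Eventually.of_forall fun z => ?_
    have h := (phi_tendsto hf_cont hf_supp hf_int z).comp hr
    exact h.mul (h.log (Real.exp_pos _).ne')

lemma entropy_formula (hn : 1 ≤ n) (hf_cont : Continuous f) (hf_nonneg : ∀ x, 0 ≤ f x)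
    (hf_supp : HasCompactSupport f) (hf_int : ∫ x, f x = 1) {R : ℝ}
    (hR : ∀ y, f y ≠ 0 → ‖y‖ ≤ R) {t : ℝ} (ht : 1 ≤ t) :
    shannonEntropy n f t = (n : ℝ) / 2 * Real.log (4 * π * t) -
      (4 * π) ^ (-((n : ℝ) / 2)) *
        ∫ z, phiResc n f (√t)⁻¹ z * Real.log (phiResc n f (√t)⁻¹ z) := by
  have hfi : Integrable f := hf_cont.integrable_of_hasCompactSupport hf_supp
  have ht0 : 0 < t := by linarith
  have hs : 0 < √t := Real.sqrt_pos.2 ht0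
  have hr1 : (√t)⁻¹ ≤ 1 := inv_le_one_of_one_le₀ (Real.one_le_sqrt.2 ht)
  have hr0 : 0 ≤ (√t)⁻¹ := by positivity
  have hp : 0 < 4 * π * t := by positivity
  have hscale : ∀ G : EuclideanSpace ℝ (Fin n) → ℝ,
      ∫ x, G x = √t ^ n * ∫ z, G (√t • z) := fun G => by
    rw [Measure.integral_comp_smul, finrank_euclideanSpace, Fintype.card_fin, smul_eq_mul,
      abs_of_pos (by positivity), ← mul_assoc, mul_inv_cancel₀ (by positivity), one_mul]
  set c := (4 * π * t) ^ (-(n : ℝ) / 2) with hc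
  have hcpos : 0 < c := by positivity
  have hk : √t ^ n * c = (4 * π) ^ (-((n : ℝ) / 2)) := by
    have : √t ^ n = t ^ ((n : ℝ) / 2) := by
      rw [Real.sqrt_eq_rpow, ← Real.rpow_natCast, ← Real.rpow_mul ht0.le]; congr 1; ring
    rw [this, hc, Real.mul_rpow (by positivity) ht0.le, neg_div, Real.rpow_neg ht0.le]
    have := (Real.rpow_pos_of_pos ht0 ((n : ℝ) / 2)).ne'
    field_simp
  have hlogc : Real.log c = -((n : ℝ) / 2 * Real.log (4 * π * t)) := by
    rw [hc, Real.log_rpow hp]; ring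
  have hone := heatSol_integral n f hfi hf_int ht0
  rw [hscale] at hone
  simp_rw [heatSol_scale n f ht0] at hone
  rw [integral_const_mul, ← mul_assoc, hk] at hone
  have hphi : Integrable (phiResc n f (√t)⁻¹) := by
    apply Integrable.of_integral_ne_zero
    intro h0
    rw [h0] at hone
    simp at hone
  have hlogi : Integrable (fun z => phiResc n f (√t)⁻¹ z * Real.log (phiResc n f (√t)⁻¹ z)) :=
    (philog_bound_integrable hn R).mono' (philog_meas hf_cont _) (Eventually.of_forall fun z =>
      philog_bound hf_cont hf_nonneg hf_supp hf_int hR hr0 hr1 z)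
  unfold shannonEntropy
  rw [hscale]
  have e : ∀ z, heatSol n f t (√t • z) * Real.log (heatSol n f t (√t • z)) =
      c * (Real.log c * phiResc n f (√t)⁻¹ z +
        phiResc n f (√t)⁻¹ z * Real.log (phiResc n f (√t)⁻¹ z)) := fun z => by
    have hpos : 0 < phiResc n f (√t)⁻¹ z := (Real.exp_pos _).trans_le
      (phi_bounds hf_cont hf_nonneg hf_supp hf_int hR hr0 hr1 z).1
    rw [heatSol_scale n f ht0, ← hc, Real.log_mul hcpos.ne' hpos.ne']
    ring
  simp_rw [e]
  rw [integral_const_mul, integral_add (hphi.const_mul _) hlogi, integral_const_mul,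
    ← mul_assoc, hk, hlogc]
  linear_combination ((n : ℝ) / 2 * Real.log (4 * π * t)) * hone
end

/-- Ni's asymptotics in the Euclidean case: the renormalized entropy
`H(u(t)) - (n/2)log(4πe t)` tends to `0` as `t → ∞`; equivalently `N(u(t))/t → 4πe`. -/
theorem renormalized_entropy_limit (n : ℕ) (hn : 1 ≤ n)
    (f : EuclideanSpace ℝ (Fin n) → ℝ)
    (hf_cont : Continuous f) (hf_nonneg : ∀ x, 0 ≤ f x)
    (hf_supp : HasCompactSupport f)
    (hf_int : ∫ x, f x = 1) :
    Filter.Tendsto (fun t => shannonEntropy n f t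
        - ((n : ℝ) / 2) * Real.log (4 * π * Real.exp 1 * t)) Filter.atTop (nhds 0) ∧
    Filter.Tendsto (fun t => entropyPower n f t / t) Filter.atTop
      (nhds (4 * π * Real.exp 1)) := by
  have hn0 : (0 : ℝ) < n := by exact_mod_cast hn
  obtain ⟨R, hR⟩ : ∃ R : ℝ, ∀ y, f y ≠ 0 → ‖y‖ ≤ R := by
    obtain ⟨R, hR⟩ := hf_supp.isCompact.isBounded.exists_norm_le
    exact ⟨R, fun y hy => hR y (subset_tsupport f hy)⟩
  have hA : Filter.Tendsto (fun t => shannonEntropy n f t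
        - ((n : ℝ) / 2) * Real.log (4 * π * Real.exp 1 * t)) Filter.atTop (nhds 0) := by
    have h := ((philog_tendsto hn hf_cont hf_nonneg hf_supp hf_int hR).const_mul
      (-(4 * π) ^ (-((n : ℝ) / 2)))).sub_const ((n : ℝ) / 2)
    have e0 : -(4 * π) ^ (-((n : ℝ) / 2)) * (-((n : ℝ) / 2 * (4 * π) ^ ((n : ℝ) / 2)))
        - (n : ℝ) / 2 = 0 := by
      have hp : 0 < (4 * π) ^ ((n : ℝ) / 2) := by positivity
      rw [Real.rpow_neg (by positivity)]
      field_simp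
      ring
    rw [e0] at h
    refine h.congr' ?_
    filter_upwards [eventually_ge_atTop 1] with t ht
    have ht0 : 0 < t := by linarith
    rw [entropy_formula hn hf_cont hf_nonneg hf_supp hf_int hR ht,
      show 4 * π * Real.exp 1 * t = (4 * π * t) * Real.exp 1 by ring,
      Real.log_mul (x := 4 * π * t) (by positivity) (Real.exp_pos 1).ne', Real.log_exp]
    ring
  refine ⟨hA, ?_⟩
  have h := ((hA.const_mul (2 / (n : ℝ))).rexp).mul_const (4 * π * Real.exp 1)
  rw [mul_zero, Real.exp_zero, one_mul] at h
  refine h.congr' ?_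
  filter_upwards [eventually_ge_atTop 1] with t ht
  have ht0 : 0 < t := by linarith
  unfold entropyPower
  rw [mul_sub, ← mul_assoc (2 / (n : ℝ)), show 2 / (n : ℝ) * (n / 2) = 1 by field_simp, one_mul,
    Real.exp_sub, Real.exp_log (by positivity)]
  field_simp
end

section
/- Let n ≥ 1 and let f : ℝⁿ → ℝ be a nonnegative, continuous, compactly supported function with ∫_{ℝⁿ} f dx = 1, and let u(t,x) = ∫_{ℝⁿ} (4πt)^{-n/2} exp(-‖x-y‖²/(4t)) f(y) dy. Then for all 0 < s ≤ t, N(u(t)) - N(u(s)) ≤ (t - s) · (2/n) · I(u(s)) · N(u(s)), where N(u(t)) = exp((2/n) H(u(t))) is the Shannon entropy power and I(u(s)) = ∫_{ℝⁿ} |∇ log u(s,x)|² u(s,x) dx is the Fisher information; in particular t ↦ N(u(t)) grows at most linearly with slope (2/n) I(u(s)) N(u(s)) past time s. -/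
open Real MeasureTheory

/-- The Fisher information of the heat solution at time `t`. -/
noncomputable def fisherInfo (n : ℕ) (f : EuclideanSpace ℝ (Fin n) → ℝ) (t : ℝ) : ℝ :=
  ∫ x, ‖gradient (fun y => Real.log (heatSol n f t y)) x‖ ^ 2 * heatSol n f t x


namespace HeatAux

/-- Euclidean space. -/
abbrev EE (n : ℕ) := EuclideanSpace ℝ (Fin n)

/-- Coordinate unit vectors. -/
noncomputable abbrev ev {n : ℕ} (i : Fin n) : EE n := EuclideanSpace.single i (1 : ℝ)

/-- Gaussian kernel. -/
noncomputable def G {n : ℕ} (t : ℝ) (x : EE n) : ℝ :=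
  (4 * π * t) ^ (-(n : ℝ) / 2) * Real.exp (-‖x‖ ^ 2 / (4 * t))

/-- First derivative of the kernel. -/
noncomputable def G1 {n : ℕ} (i : Fin n) (t : ℝ) (x : EE n) : ℝ :=
  (-(x i) / (2 * t)) * G t x

/-- Second derivative of the kernel. -/
noncomputable def G2 {n : ℕ} (i : Fin n) (t : ℝ) (x : EE n) : ℝ :=
  ((x i) ^ 2 / (4 * t ^ 2) - 1 / (2 * t)) * G t x

variable {n : ℕ}

lemma G_pos {t : ℝ} (ht : 0 < t) (x : EE n) : 0 < G t x := by
  unfold G; positivity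

lemma G_cont (t : ℝ) : Continuous (G t : EE n → ℝ) := by
  unfold G; fun_prop

lemma G1_cont (i : Fin n) (t : ℝ) : Continuous (G1 i t : EE n → ℝ) := by
  have := G_cont (n := n) t
  unfold G1; fun_prop

lemma G2_cont (i : Fin n) (t : ℝ) : Continuous (G2 i t : EE n → ℝ) := by
  have := G_cont (n := n) t
  unfold G2; fun_prop

lemma G_contDiff (t : ℝ) : ContDiff ℝ 1 (G t : EE n → ℝ) := by
  unfold G
  exact contDiff_const.mul (((contDiff_norm_sq ℝ).neg.div_const _).exp)

lemma G1_contDiff (i : Fin n) (t : ℝ) : ContDiff ℝ 1 (G1 i t : EE n → ℝ) := by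
  have := G_contDiff (n := n) t
  unfold G1
  fun_prop

lemma norm_line (x : EE n) (i : Fin n) (r : ℝ) :
    ‖x + r • ev i‖ ^ 2 = ‖x‖ ^ 2 + 2 * r * x i + r ^ 2 := by
  rw [norm_add_sq_real, inner_smul_right, norm_smul]
  simp [EuclideanSpace.inner_single_right]
  ring

lemma G_line (i : Fin n) {t : ℝ} (ht : 0 < t) (x : EE n) :
    HasLineDerivAt ℝ (G t) (G1 i t x) x (ev i) := by
  unfold HasLineDerivAt
  have h : (fun r : ℝ => G t (x + r • ev i)) = fun r =>
    (4 * π * t) ^ (-(n : ℝ) / 2) * Real.exp (-(‖x‖ ^ 2 + 2 * r * x i + r ^ 2) / (4 * t)) := by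
    funext r; simp only [G, norm_line]
  rw [h]
  have h1 : HasDerivAt (fun r : ℝ => -(‖x‖ ^ 2 + 2 * r * x i + r ^ 2) / (4 * t))
      (-(x i) / (2 * t)) 0 := by
    have := ((((((hasDerivAt_id (0:ℝ)).const_mul 2).mul_const (x i)).const_add (‖x‖^2)).add
      ((hasDerivAt_id (0:ℝ)).pow 2)).neg).div_const (4 * t)
    refine this.congr_deriv ?_
    simp; field_simp; ring
  refine (h1.exp.const_mul _).congr_deriv ?_
  simp [G1, G]; ring

lemma coord_line (i : Fin n) (x : EE n) : HasLineDerivAt ℝ (fun x : EE n => x i) 1 x (ev i) := by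
  unfold HasLineDerivAt
  have : (fun r : ℝ => (x + r • ev i) i) = fun r => x i + r := by
    funext r; simp
  rw [this]
  exact (hasDerivAt_id (0:ℝ)).const_add _

lemma G1_line (i : Fin n) {t : ℝ} (ht : 0 < t) (x : EE n) :
    HasLineDerivAt ℝ (G1 i t) (G2 i t x) x (ev i) := by
  have h1 := coord_line i x
  have h2 := G_line i ht x
  unfold HasLineDerivAt at *
  have h := ((h1.neg.div_const (2 * t)).mul h2)
  refine h.congr_deriv ?_
  simp [G2, G1]; field_simp; ring

lemma G_fderiv (i : Fin n) {t : ℝ} (ht : 0 < t) (x : EE n) :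
    fderiv ℝ (G t) x (ev i) = G1 i t x := by
  have := ((G_contDiff (n := n) t).differentiable one_ne_zero x).hasFDerivAt.hasLineDerivAt (ev i)
  exact this.unique (G_line i ht x)

lemma G1_fderiv (i : Fin n) {t : ℝ} (ht : 0 < t) (x : EE n) :
    fderiv ℝ (G1 i t) x (ev i) = G2 i t x := by
  have := ((G1_contDiff (n := n) i t).differentiable one_ne_zero x).hasFDerivAt.hasLineDerivAt (ev i)
  exact this.unique (G1_line i ht x)

/-- integrability of weighted Gaussians -/
lemma exp_int {c : ℝ} (hc : 0 < c) : Integrable (fun x : EE n => Real.exp (-(c * ‖x‖ ^ 2))) := by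
  have := GaussianFourier.integrable_cexp_neg_mul_sq_norm_add (V := EE n) (b := (c : ℂ)) (by simpa) 0 0
  have h2 := this.norm
  refine h2.congr (Filter.Eventually.of_forall fun x => ?_)
  simp [Complex.norm_exp]
  left; norm_cast

lemma weight_le {c : ℝ} (hc : 0 < c) : ∃ C : ℝ, ∀ r : ℝ, 0 ≤ r →
    (1 + r) ^ 2 * Real.exp (-(c * r)) ≤ C * Real.exp (-(c / 2 * r)) := by
  refine ⟨(1 + 4 / c) ^ 2, fun r hr => ?_⟩
  have h1 : c / 4 * r + 1 ≤ Real.exp (c / 4 * r) := Real.add_one_le_exp _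
  have h2 : 1 + r ≤ (1 + 4 / c) * Real.exp (c / 4 * r) := by
    have : 1 + r ≤ (1 + 4 / c) * (c / 4 * r + 1) := by
      have : (1 + 4 / c) * (c / 4 * r + 1) = 1 + r + (c / 4 * r + 4 / c) := by field_simp; ring
      rw [this]; have : 0 ≤ c / 4 * r + 4 / c := by positivity
      linarith
    exact this.trans (by gcongr)
  have h3 : Real.exp (-(c / 2 * r)) = Real.exp (c / 4 * r) ^ 2 * Real.exp (-(c * r)) := by
    rw [← Real.exp_nat_mul, ← Real.exp_add]; congr 1; push_cast; ring
  rw [h3, ← mul_assoc, ← mul_pow]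
  gcongr

lemma weight_int {c : ℝ} (hc : 0 < c) (C : ℝ) :
    Integrable (fun x : EE n => C * ((1 + ‖x‖ ^ 2) ^ 2 * Real.exp (-(c * ‖x‖ ^ 2)))) := by
  refine Integrable.const_mul ?_ C
  obtain ⟨K, hK⟩ := weight_le hc
  refine ((exp_int (n := n) (half_pos hc)).const_mul K).mono' ?_ ?_
  · exact (by fun_prop : Continuous _).aestronglyMeasurable
  · refine Filter.Eventually.of_forall fun x => ?_
    rw [Real.norm_of_nonneg (by positivity)]
    exact hK _ (by positivity)

/-- integrability from a weighted Gaussian bound -/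
lemma int_of_bound {c C : ℝ} (hc : 0 < c) {g : EE n → ℝ} (hg : AEStronglyMeasurable g volume)
    (h : ∀ x, |g x| ≤ C * ((1 + ‖x‖ ^ 2) ^ 2 * Real.exp (-(c * ‖x‖ ^ 2)))) : Integrable g :=
  (weight_int hc C).mono' hg (Filter.Eventually.of_forall h)

lemma coord_le (x : EE n) (i : Fin n) : |x i| ≤ ‖x‖ := by
  have := PiLp.norm_apply_le x i
  simpa using this

lemma coord_sq_le (x : EE n) (i : Fin n) : (x i) ^ 2 ≤ ‖x‖ ^ 2 := by
  have := coord_le x i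
  exact sq_le_sq' (by linarith [neg_abs_le (x i)]) (by linarith [le_abs_self (x i)])

lemma coord_le_w (x : EE n) (i : Fin n) : |x i| ≤ 1 + ‖x‖ ^ 2 := by
  have := coord_le x i
  nlinarith [sq_nonneg (‖x‖ - 1)]

lemma G_eq (t : ℝ) (x : EE n) : G t x =
    (4 * π * t) ^ (-(n : ℝ) / 2) * Real.exp (-(1 / (4 * t) * ‖x‖ ^ 2)) := by
  unfold G; congr 2; ring

lemma poly_G_int {t : ℝ} (ht : 0 < t) {p : EE n → ℝ} (hp : Continuous p) (C : ℝ)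
    (h : ∀ x, |p x| ≤ C * (1 + ‖x‖ ^ 2) ^ 2) : Integrable (fun x => p x * G t x) := by
  refine int_of_bound (c := 1 / (4 * t)) (C := C * (4 * π * t) ^ (-(n : ℝ) / 2)) (by positivity)
    (hp.mul (G_cont t)).aestronglyMeasurable fun x => ?_
  rw [abs_mul, abs_of_pos (G_pos ht x), G_eq]
  have := h x
  calc _ ≤ C * (1 + ‖x‖ ^ 2) ^ 2 * ((4 * π * t) ^ (-(n : ℝ) / 2) * Real.exp (-(1 / (4 * t) * ‖x‖ ^ 2))) := by
        gcongr
    _ = _ := by ring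

lemma one_le_w (x : EE n) : 1 ≤ (1 + ‖x‖ ^ 2) ^ 2 := by nlinarith [sq_nonneg ‖x‖]
lemma w_le_w (x : EE n) : 1 + ‖x‖ ^ 2 ≤ (1 + ‖x‖ ^ 2) ^ 2 := by nlinarith [sq_nonneg ‖x‖]

lemma G_int {t : ℝ} (ht : 0 < t) : Integrable (G t : EE n → ℝ) := by
  have := poly_G_int (n := n) ht (p := fun _ => 1) continuous_const 1 (fun x => by
    simpa using one_le_w x)
  simpa using this

lemma xG_int (i : Fin n) {t : ℝ} (ht : 0 < t) : Integrable (fun x : EE n => x i * G t x) :=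
  poly_G_int ht (by fun_prop) 1 fun x => by linarith [coord_le_w x i, w_le_w x]

lemma xxG_int (i : Fin n) {t : ℝ} (ht : 0 < t) : Integrable (fun x : EE n => (x i) ^ 2 * G t x) :=
  poly_G_int ht (by fun_prop) 1 fun x => by
    rw [abs_of_nonneg (sq_nonneg _)]
    linarith [coord_sq_le x i, w_le_w x]

lemma G1_int (i : Fin n) {t : ℝ} (ht : 0 < t) : Integrable (G1 i t : EE n → ℝ) := by
  refine ((xG_int i ht).const_mul (-1 / (2 * t))).congr (Filter.Eventually.of_forall fun x => ?_)
  simp only [G1]; ring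

lemma G_integral {t : ℝ} (ht : 0 < t) : ∫ x : EE n, G t x = 1 := by
  simp_rw [G_eq]
  rw [integral_const_mul]
  have := GaussianFourier.integral_rexp_neg_mul_sq_norm (V := EE n) (b := 1 / (4 * t)) (by positivity)
  have h2 : ∀ x : EE n, Real.exp (-(1 / (4 * t) * ‖x‖ ^ 2)) = Real.exp (-(1 / (4 * t)) * ‖x‖ ^ 2) := by
    intro x; ring_nf
  simp_rw [h2]
  rw [this, finrank_euclideanSpace_fin]
  have h3 : π / (1 / (4 * t)) = 4 * π * t := by field_simp
  rw [h3, ← Real.rpow_add (by positivity)]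
  rw [show -(n : ℝ) / 2 + n / 2 = 0 by ring, Real.rpow_zero]

lemma G_neg (t : ℝ) (x : EE n) : G t (-x) = G t x := by simp [G]

lemma xG_integral (i : Fin n) (t : ℝ) : ∫ x : EE n, x i * G t x = 0 := by
  have h := integral_neg_eq_self (fun x : EE n => x i * G t x) volume
  simp only [G_neg, PiLp.neg_apply, neg_mul, integral_neg] at h
  linarith

lemma G1_integral (i : Fin n) (t : ℝ) : ∫ x : EE n, G1 i t x = 0 := by
  have : (G1 i t : EE n → ℝ) = fun x => (-1 / (2 * t)) * (x i * G t x) := by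
    funext x; simp only [G1]; ring
  rw [this, integral_const_mul, xG_integral, mul_zero]

lemma ibp {a a' b b' : EE n → ℝ} (v : EE n) (h1 : Integrable (fun x => a' x * b x))
    (h2 : Integrable (fun x => a x * b' x)) (h3 : Integrable (fun x => a x * b x))
    (ha : ∀ x, HasLineDerivAt ℝ a (a' x) x v) (hb : ∀ x, HasLineDerivAt ℝ b (b' x) x v) :
    ∫ x, a x * b' x = - ∫ x, a' x * b x :=
  integral_bilinear_hasLineDerivAt_right_eq_neg_left_of_integrable
    (B := ContinuousLinearMap.mul ℝ ℝ) h1 h2 h3 (fun x _ => ha x) (fun x _ => hb x)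

lemma xxG_integral (i : Fin n) {t : ℝ} (ht : 0 < t) : ∫ x : EE n, (x i) ^ 2 * G t x = 2 * t := by
  have h := ibp (n := n) (a := fun x => x i) (a' := fun _ => 1) (b := G t) (b' := G1 i t) (ev i)
    (by simpa using G_int ht)
    (((xxG_int i ht).const_mul (-1 / (2 * t))).congr (Filter.Eventually.of_forall fun x => by
      simp only [G1]; ring))
    (xG_int i ht) (coord_line i) (G_line i ht)
  have h2 : (fun x : EE n => x i * G1 i t x) = fun x => (-1 / (2 * t)) * ((x i) ^ 2 * G t x) := by
    funext x; simp only [G1]; ring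
  rw [h2, integral_const_mul] at h
  simp only [one_mul, G_integral ht] at h
  field_simp at h
  linarith

end HeatAux

namespace HeatAux
variable {n : ℕ}

/-- scalar convolution -/
noncomputable abbrev cv (f g : EE n → ℝ) : EE n → ℝ :=
  convolution f g (ContinuousLinearMap.mul ℝ ℝ) volume

lemma cv_apply (f g : EE n → ℝ) (x : EE n) : cv f g x = ∫ y, f y * g (x - y) := rfl

lemma cv_comm (f g : EE n → ℝ) : cv f g = cv g f := by
  funext x
  rw [cv_apply, cv, convolution_mul_swap]
  exact integral_congr_ae (Filter.Eventually.of_forall fun y => mul_comm _ _)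

lemma G_mul {s τ : ℝ} (hs : 0 < s) (hτ : 0 < τ) (x z : EE n) :
    G s z * G τ (x - z) = G (s + τ) x * G (s * τ / (s + τ)) (z - (s / (s + τ)) • x) := by
  unfold G
  have h1 : (4 * π * s) ^ (-(n : ℝ) / 2) * (4 * π * τ) ^ (-(n : ℝ) / 2) =
      (4 * π * (s + τ)) ^ (-(n : ℝ) / 2) * (4 * π * (s * τ / (s + τ))) ^ (-(n : ℝ) / 2) := by
    rw [← Real.mul_rpow (by positivity) (by positivity),
      ← Real.mul_rpow (by positivity) (by positivity)]
    congr 1; field_simp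
  have h2 : Real.exp (-‖z‖ ^ 2 / (4 * s)) * Real.exp (-‖x - z‖ ^ 2 / (4 * τ)) =
      Real.exp (-‖x‖ ^ 2 / (4 * (s + τ))) *
        Real.exp (-‖z - (s / (s + τ)) • x‖ ^ 2 / (4 * (s * τ / (s + τ)))) := by
    rw [← Real.exp_add, ← Real.exp_add]
    congr 1
    rw [norm_sub_sq_real, norm_sub_sq_real, norm_smul, inner_smul_right, real_inner_comm,
      Real.norm_of_nonneg (by positivity)]
    field_simp
    ring
  calc _ = ((4 * π * s) ^ (-(n : ℝ) / 2) * (4 * π * τ) ^ (-(n : ℝ) / 2)) *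
        (Real.exp (-‖z‖ ^ 2 / (4 * s)) * Real.exp (-‖x - z‖ ^ 2 / (4 * τ))) := by ring
    _ = _ := by rw [h1, h2]; ring

lemma cv_GG {s τ : ℝ} (hs : 0 < s) (hτ : 0 < τ) : cv (G s : EE n → ℝ) (G τ) = G (s + τ) := by
  funext x
  rw [cv_apply]
  simp_rw [G_mul hs hτ]
  rw [integral_const_mul, integral_sub_right_eq_self (fun z : EE n => G (s * τ / (s + τ)) z),
    G_integral (by positivity), mul_one]

lemma cv_G1G (i : Fin n) {s τ : ℝ} (hs : 0 < s) (hτ : 0 < τ) :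
    cv (G1 i s : EE n → ℝ) (G τ) = G1 i (s + τ) := by
  funext x
  rw [cv_apply]
  have hσ : 0 < s * τ / (s + τ) := by positivity
  let φ : EE n → ℝ := fun w => (-1 / (2 * s) * G (s + τ) x) *
      (w i * G (s * τ / (s + τ)) w + (s / (s + τ) * x i) * G (s * τ / (s + τ)) w)
  have h : ∀ z : EE n, G1 i s z * G τ (x - z) = φ (z - (s / (s + τ)) • x) := by
    intro z
    have := G_mul hs hτ x z
    simp only [φ, G1, PiLp.sub_apply, PiLp.smul_apply, smul_eq_mul]
    linear_combination (-(z i) / (2 * s)) * this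
  refine (integral_congr_ae (Filter.Eventually.of_forall h)).trans
    ((integral_sub_right_eq_self φ _).trans ?_)
  simp only [φ]
  rw [integral_const_mul, integral_add (xG_int i hσ)
    ((G_int hσ).const_mul _), integral_const_mul, xG_integral, G_integral hσ]
  simp only [G1]
  field_simp
  ring

lemma cv_GG1 (i : Fin n) {s τ : ℝ} (hs : 0 < s) (hτ : 0 < τ) :
    cv (G s : EE n → ℝ) (G1 i τ) = G1 i (s + τ) := by
  rw [cv_comm, cv_G1G i hτ hs, add_comm]

lemma cv_assoc {f g k : EE n → ℝ} (hf : Continuous f) (hc : HasCompactSupport f)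
    (hg : Continuous g) (hk : Continuous k) (hgi : Integrable g) (hki : Integrable k) :
    cv (cv f g) k = cv f (cv g k) := by
  funext x
  refine convolution_assoc _ _ _ _ (fun a b c => by simp [mul_assoc]) hf.aestronglyMeasurable
    hg.aestronglyMeasurable hk.aestronglyMeasurable ?_ ?_ ?_
  · refine Filter.Eventually.of_forall fun y => ?_
    exact hc.convolutionExists_left_of_continuous_right _ hf.locallyIntegrable hg y
  · exact hgi.norm.ae_convolution_exists _ hki.norm
  · exact hc.norm.convolutionExists_left _ hf.norm
      (hgi.norm.integrable_convolution _ hki.norm).locallyIntegrable x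

lemma stam_coord (i : Fin n) {τ : ℝ} (hτ : 0 < τ) (lam : ℝ) {u d D : EE n → ℝ}
    (hu : ∀ x, 0 < u x) (hui : Integrable u) (hu1 : ∫ x, u x = 1) (hdi : Integrable d)
    (hq : Integrable (fun x => d x ^ 2 / u x)) (hU : ∀ x, 0 < cv u (G τ) x)
    (hD1 : D = cv u (G1 i τ)) (hD2 : D = cv d (G τ)) :
    ∫ x, D x ^ 2 / cv u (G τ) x ≤
      lam ^ 2 * (∫ x, d x ^ 2 / u x) + (1 - lam) ^ 2 * (1 / (2 * τ)) := by
  set q : EE n → ℝ := fun x => d x ^ 2 / u x with hqdef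
  set K : EE n → ℝ := fun z => (1 / (4 * τ ^ 2)) * ((z i) ^ 2 * G τ z) with hK
  have hKi : Integrable K := (xxG_int i hτ).const_mul _
  have hGi : Integrable (G τ : EE n → ℝ) := G_int hτ
  have hG1i : Integrable (G1 i τ : EE n → ℝ) := G1_int i hτ
  set L := ContinuousLinearMap.mul ℝ ℝ
  have key : ∀ᵐ x, D x ^ 2 / cv u (G τ) x ≤ lam ^ 2 * cv q (G τ) x +
      2 * lam * (1 - lam) * cv d (G1 i τ) x + (1 - lam) ^ 2 * cv u K x := by
    filter_upwards [hq.ae_convolution_exists L hGi, hdi.ae_convolution_exists L hG1i,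
      hui.ae_convolution_exists L hKi, hdi.ae_convolution_exists L hGi,
      hui.ae_convolution_exists L hG1i, hui.ae_convolution_exists L hGi] with x a1 a2 a3 a4 a5 a6
    have b1 : Integrable (fun z => q z * G τ (x - z)) := a1
    have b2 : Integrable (fun z => d z * G1 i τ (x - z)) := a2
    have b3 : Integrable (fun z => u z * K (x - z)) := a3
    have b4 : Integrable (fun z => d z * G τ (x - z)) := a4
    have b5 : Integrable (fun z => u z * G1 i τ (x - z)) := a5
    have b6 : Integrable (fun z => u z * G τ (x - z)) := a6
    set m := D x / cv u (G τ) x with hm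
    have hnn : 0 ≤ ∫ z, (lam ^ 2 * (q z * G τ (x - z)) +
        2 * lam * (1 - lam) * (d z * G1 i τ (x - z)) + (1 - lam) ^ 2 * (u z * K (x - z)) +
        (-2 * m * lam) * (d z * G τ (x - z)) + (-2 * m * (1 - lam)) * (u z * G1 i τ (x - z)) +
        m ^ 2 * (u z * G τ (x - z))) := by
      refine integral_nonneg fun z => ?_
      have h := hu z
      have : lam ^ 2 * (q z * G τ (x - z)) +
        2 * lam * (1 - lam) * (d z * G1 i τ (x - z)) + (1 - lam) ^ 2 * (u z * K (x - z)) +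
        (-2 * m * lam) * (d z * G τ (x - z)) + (-2 * m * (1 - lam)) * (u z * G1 i τ (x - z)) +
        m ^ 2 * (u z * G τ (x - z)) = u z * G τ (x - z) *
          (lam * (d z / u z) + (1 - lam) * (-((x - z) i) / (2 * τ)) - m) ^ 2 := by
        simp only [hqdef, hK, G1]
        field_simp
        ring
      simp only [Pi.zero_apply]
      rw [this]
      have := G_pos hτ (x - z)
      positivity
    rw [integral_add (by fun_prop) (by fun_prop), integral_add (by fun_prop) (by fun_prop),
      integral_add (by fun_prop) (by fun_prop), integral_add (by fun_prop) (by fun_prop),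
      integral_add (by fun_prop) (by fun_prop)] at hnn
    simp only [integral_const_mul, ← cv_apply] at hnn
    rw [← hD1, ← hD2] at hnn
    have hUx := hU x
    have e : D x ^ 2 / cv u (G τ) x = 2 * m * D x - m ^ 2 * cv u (G τ) x := by
      rw [hm]; field_simp; ring
    rw [e]
    nlinarith
  have r1 : Integrable (cv q (G τ)) := hq.integrable_convolution L hGi
  have r2 : Integrable (cv d (G1 i τ)) := hdi.integrable_convolution L hG1i
  have r3 : Integrable (cv u K) := hui.integrable_convolution L hKi
  have s1 : ∫ x, cv q (G τ) x = ∫ x, q x := by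
    rw [cv, integral_convolution L hq hGi, G_integral hτ]; simp [L]
  have s2 : ∫ x, cv d (G1 i τ) x = 0 := by
    rw [cv, integral_convolution L hdi hG1i, G1_integral]; simp [L]
  have s3 : ∫ x, cv u K x = 1 / (2 * τ) := by
    rw [cv, integral_convolution L hui hKi, hu1, hK, integral_const_mul, xxG_integral i hτ]
    simp [L]; field_simp; norm_num
  calc _ ≤ ∫ x, (lam ^ 2 * cv q (G τ) x +
      2 * lam * (1 - lam) * cv d (G1 i τ) x + (1 - lam) ^ 2 * cv u K x) := by
        refine integral_mono_of_nonneg (Filter.Eventually.of_forall fun x => ?_) (by fun_prop) key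
        have := hU x
        simp only [Pi.zero_apply]
        positivity
    _ = _ := by
        rw [integral_add (by fun_prop) (by fun_prop), integral_add (by fun_prop) (by fun_prop)]
        simp only [integral_const_mul]
        rw [s1, s2, s3]; ring

end HeatAux

namespace HeatAux
variable {n : ℕ}

/-- Standing assumptions on the initial datum. -/
structure Dat (f : EE n → ℝ) (R : ℝ) : Prop where
  cont : Continuous f
  nonneg : ∀ x, 0 ≤ f x
  supp : HasCompactSupport f
  int : ∫ x, f x = 1
  Rnn : 0 ≤ R
  bd : ∀ y, f y ≠ 0 → ‖y‖ ≤ R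

lemma exists_dat {f : EE n → ℝ} (h1 : Continuous f) (h2 : ∀ x, 0 ≤ f x) (h3 : HasCompactSupport f)
    (h4 : ∫ x, f x = 1) : ∃ R, Dat f R := by
  obtain ⟨R, hR⟩ := (Metric.isBounded_iff_subset_closedBall (0 : EE n)).1 h3.isBounded
  refine ⟨max R 0, h1, h2, h3, h4, le_max_right _ _, fun y hy => ?_⟩
  have := hR (subset_tsupport f hy)
  rw [mem_closedBall_zero_iff] at this
  exact this.trans (le_max_left _ _)

variable {f : EE n → ℝ} {R : ℝ}

lemma Dat.cvint (h : Dat f R) {k : EE n → ℝ} (hk : Continuous k) (x : EE n) :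
    Integrable (fun y => f y * k (x - y)) :=
  h.supp.convolutionExists_left_of_continuous_right (ContinuousLinearMap.mul ℝ ℝ)
    h.cont.locallyIntegrable hk x

lemma Dat.fint (h : Dat f R) : Integrable f := h.cont.integrable_of_hasCompactSupport h.supp

lemma Dat.cv_cont (h : Dat f R) {k : EE n → ℝ} (hk : Continuous k) : Continuous (cv f k) :=
  h.supp.continuous_convolution_left _ h.cont hk.locallyIntegrable

lemma Dat.cv_mono (h : Dat f R) {k k' : EE n → ℝ} (hk : Continuous k) (hk' : Continuous k')
    (x : EE n) (A : ℝ) (hb : ∀ y, ‖y‖ ≤ R → |k (x - y)| ≤ A * k' (x - y)) :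
    |cv f k x| ≤ A * cv f k' x := by
  rw [cv_apply, cv_apply, ← integral_const_mul]
  refine (abs_integral_le_integral_abs).trans
    (integral_mono (h.cvint hk x).abs ((h.cvint hk' x).const_mul A) fun y => ?_)
  simp only [abs_mul, abs_of_nonneg (h.nonneg y)]
  by_cases hy : f y = 0
  · simp [hy]
  · have := mul_le_mul_of_nonneg_left (hb y (h.bd y hy)) (h.nonneg y)
    linarith

lemma Dat.lower (h : Dat f R) {t : ℝ} (ht : 0 < t) (x : EE n) :
    (4 * π * t) ^ (-(n : ℝ) / 2) * Real.exp (-(‖x‖ ^ 2 + R ^ 2) / (2 * t)) ≤ cv f (G t) x := by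
  set c := (4 * π * t) ^ (-(n : ℝ) / 2) * Real.exp (-(‖x‖ ^ 2 + R ^ 2) / (2 * t))
  have : c = ∫ y, f y * c := by rw [integral_mul_const, h.int, one_mul]
  rw [this, cv_apply]
  refine integral_mono (h.fint.mul_const c) (h.cvint (G_cont t) x) fun y => ?_
  simp only
  by_cases hy : f y = 0
  · simp [hy]
  · refine mul_le_mul_of_nonneg_left ?_ (h.nonneg y)
    have hyR := h.bd y hy
    unfold G
    have h1 : ‖x - y‖ ^ 2 ≤ 2 * (‖x‖ ^ 2 + R ^ 2) := by
      have := norm_sub_le x y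
      have h0 := norm_nonneg (x - y)
      have h0' := norm_nonneg x
      have h0'' := norm_nonneg y
      have : ‖x - y‖ ^ 2 ≤ (‖x‖ + R) ^ 2 := by gcongr; linarith
      nlinarith [sq_nonneg (‖x‖ - R)]
    refine mul_le_mul_of_nonneg_left (Real.exp_le_exp.2 ?_) (by positivity)
    rw [div_le_div_iff₀ (by positivity) (by positivity)]
    nlinarith

lemma Dat.pos (h : Dat f R) {t : ℝ} (ht : 0 < t) (x : EE n) : 0 < cv f (G t) x :=
  lt_of_lt_of_le (by positivity) (h.lower ht x)

lemma Dat.upper (h : Dat f R) {t : ℝ} (ht : 0 < t) (x : EE n) : cv f (G t) x ≤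
    (4 * π * t) ^ (-(n : ℝ) / 2) * Real.exp (R ^ 2 / (4 * t)) * Real.exp (-(1 / (8 * t) * ‖x‖ ^ 2)) := by
  set c := (4 * π * t) ^ (-(n : ℝ) / 2) * Real.exp (R ^ 2 / (4 * t)) *
    Real.exp (-(1 / (8 * t) * ‖x‖ ^ 2)) with hc
  have : c = ∫ y, f y * c := by rw [integral_mul_const, h.int, one_mul]
  rw [this, cv_apply]
  refine integral_mono (h.cvint (G_cont t) x) (h.fint.mul_const c) fun y => ?_
  simp only
  by_cases hy : f y = 0
  · simp [hy]
  · refine mul_le_mul_of_nonneg_left ?_ (h.nonneg y)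
    have hyR := h.bd y hy
    unfold G
    rw [hc, mul_assoc ((4 * π * t) ^ (-(n : ℝ) / 2)), ← Real.exp_add]
    have h1 : ‖x‖ ^ 2 ≤ 2 * (‖x - y‖ ^ 2 + R ^ 2) := by
      have := norm_add_le (x - y) y
      rw [sub_add_cancel] at this
      have h0 := norm_nonneg (x - y)
      have h0' := norm_nonneg x
      have h0'' := norm_nonneg y
      have : ‖x‖ ^ 2 ≤ (‖x - y‖ + R) ^ 2 := by gcongr; linarith
      nlinarith [sq_nonneg (‖x - y‖ - R)]
    refine mul_le_mul_of_nonneg_left (Real.exp_le_exp.2 ?_) (by positivity)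
    have : R ^ 2 / (4 * t) + -(1 / (8 * t) * ‖x‖ ^ 2) = (2 * R ^ 2 - ‖x‖ ^ 2) / (8 * t) := by
      field_simp; ring
    rw [this, div_le_div_iff₀ (by positivity) (by positivity)]
    nlinarith

/-- uniform bounds on compact time intervals -/
lemma Dat.unif (h : Dat f R) {a b : ℝ} (ha : 0 < a) (hab : a ≤ b) :
    ∃ C c : ℝ, 0 ≤ C ∧ 0 < c ∧ ∀ t, a ≤ t → t ≤ b → ∀ x : EE n,
      cv f (G t) x ≤ C * Real.exp (-(c * ‖x‖ ^ 2)) ∧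
      |Real.log (cv f (G t) x)| ≤ C * (1 + ‖x‖ ^ 2) ∧
      (∀ i, |cv f (G1 i t) x| ≤ C * (1 + ‖x‖ ^ 2) * cv f (G t) x) ∧
      (∀ i, |cv f (G1 i t) x| ^ 2 ≤ C * (1 + ‖x‖ ^ 2) * cv f (G t) x ^ 2) ∧
      (∀ i, |cv f (G2 i t) x| ≤ C * (1 + ‖x‖ ^ 2) * cv f (G t) x) := by
  have hb : 0 < b := ha.trans_le hab
  have hR := h.Rnn
  set Pa := (4 * π * a) ^ (-(n : ℝ) / 2) with hPa
  set Pb := (4 * π * b) ^ (-(n : ℝ) / 2) with hPb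
  have hPa0 : 0 < Pa := by positivity
  have hPb0 : 0 < Pb := by positivity
  set C1 := Pa * Real.exp (R ^ 2 / (4 * a)) with hC1
  have hC10 : 0 < C1 := by positivity
  set C2 := |Real.log C1| + |Real.log Pb| + (1 + R ^ 2) / (2 * a) with hC2
  set C3 := (1 + R) / (2 * a) with hC3
  set C4 := (1 + R ^ 2) / (2 * a ^ 2) with hC4
  set C5 := 1 / (2 * a) with hC5
  have hC2' : 0 ≤ C2 := by positivity
  have hC3' : 0 ≤ C3 := by positivity
  have hC4' : 0 ≤ C4 := by positivity
  have hC5' : 0 ≤ C5 := by positivity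
  refine ⟨C1 + C2 + C3 + C4 + C5, 1 / (8 * b), by positivity, by positivity, fun t hat htb x => ?_⟩
  have ht : 0 < t := ha.trans_le hat
  have hu := h.pos ht x
  have hW : (1:ℝ) ≤ 1 + ‖x‖ ^ 2 := by nlinarith [sq_nonneg ‖x‖]
  have hnr : -(n : ℝ) / 2 ≤ 0 := by
    have : (0:ℝ) ≤ n := Nat.cast_nonneg n
    linarith
  have hup : cv f (G t) x ≤ C1 * Real.exp (-(1 / (8 * b) * ‖x‖ ^ 2)) := by
    refine (h.upper ht x).trans ?_
    rw [hC1]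
    have e1 : (4 * π * t) ^ (-(n : ℝ) / 2) ≤ Pa :=
      Real.rpow_le_rpow_of_nonpos (by positivity) (by gcongr) hnr
    gcongr
  have hlow : Pb * Real.exp (-(‖x‖ ^ 2 + R ^ 2) / (2 * a)) ≤ cv f (G t) x := by
    refine le_trans ?_ (h.lower ht x)
    have e1 : Pb ≤ (4 * π * t) ^ (-(n : ℝ) / 2) :=
      Real.rpow_le_rpow_of_nonpos (by positivity) (by gcongr) hnr
    refine mul_le_mul e1 (Real.exp_le_exp.2 ?_) (by positivity) (by positivity)
    rw [neg_div, neg_div, neg_le_neg_iff]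
    gcongr
  have hy1 : ∀ y : EE n, ‖y‖ ≤ R → ‖x - y‖ ≤ ‖x‖ + R := fun y hy => by
    linarith [norm_sub_le x y]
  have hG1 : ∀ i, |cv f (G1 i t) x| ≤ ((‖x‖ + R) / (2 * a)) * cv f (G t) x := fun i => by
    refine h.cv_mono (G1_cont i t) (G_cont t) x _ fun y hy => ?_
    rw [G1, abs_mul, abs_of_pos (G_pos ht _), abs_div, abs_neg, abs_of_pos (by positivity : 0 < 2 * t)]
    have := (coord_le (x - y) i).trans (hy1 y hy)
    have := (G_pos ht (x - y)).le
    gcongr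
  have hG2 : ∀ i, |cv f (G2 i t) x| ≤ ((‖x‖ + R) ^ 2 / (4 * a ^ 2) + 1 / (2 * a)) * cv f (G t) x :=
    fun i => by
    refine h.cv_mono (G2_cont i t) (G_cont t) x _ fun y hy => ?_
    rw [G2, abs_mul, abs_of_pos (G_pos ht _)]
    have h1 := (coord_le (x - y) i).trans (hy1 y hy)
    have h2 : ((x - y) i) ^ 2 ≤ (‖x‖ + R) ^ 2 := by
      rw [← sq_abs]; gcongr
    have := (G_pos ht (x - y)).le
    refine mul_le_mul_of_nonneg_right ((abs_sub _ _).trans ?_) this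
    rw [abs_of_nonneg (by positivity), abs_of_nonneg (by positivity)]
    gcongr
  have hCW : ∀ c, c ≤ C1 + C2 + C3 + C4 + C5 →
      c * (1 + ‖x‖ ^ 2) ≤ (C1 + C2 + C3 + C4 + C5) * (1 + ‖x‖ ^ 2) := fun c hc => by gcongr
  have hxR : (‖x‖ + R) ^ 2 ≤ 2 * (1 + R ^ 2) * (1 + ‖x‖ ^ 2) := by
    nlinarith [sq_nonneg (‖x‖ - R), mul_nonneg (sq_nonneg R) (sq_nonneg ‖x‖)]
  refine ⟨hup.trans (by gcongr; linarith), ?_, fun i => ?_, fun i => ?_, fun i => ?_⟩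
  · refine le_trans ?_ (hCW C2 (by linarith))
    have l1 : Real.log (cv f (G t) x) ≤ Real.log C1 := by
      refine Real.log_le_log hu (hup.trans ?_)
      have : Real.exp (-(1 / (8 * b) * ‖x‖ ^ 2)) ≤ 1 := Real.exp_le_one_iff.2 (by
        have : 0 ≤ 1 / (8 * b) * ‖x‖ ^ 2 := by positivity
        linarith)
      nlinarith
    have l2 : Real.log Pb - (‖x‖ ^ 2 + R ^ 2) / (2 * a) ≤ Real.log (cv f (G t) x) := by
      have := Real.log_le_log (by positivity) hlow
      rw [Real.log_mul hPb0.ne' (Real.exp_pos _).ne', Real.log_exp, neg_div] at this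
      linarith
    have l3 : (‖x‖ ^ 2 + R ^ 2) / (2 * a) ≤ (1 + R ^ 2) / (2 * a) * (1 + ‖x‖ ^ 2) := by
      rw [div_mul_eq_mul_div]
      gcongr
      nlinarith [mul_nonneg (sq_nonneg R) (sq_nonneg ‖x‖)]
    have l4 : |Real.log C1| + |Real.log Pb| ≤ (|Real.log C1| + |Real.log Pb|) * (1 + ‖x‖ ^ 2) :=
      le_mul_of_one_le_right (by positivity) hW
    have l5 : C2 * (1 + ‖x‖ ^ 2) = (|Real.log C1| + |Real.log Pb|) * (1 + ‖x‖ ^ 2) +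
      (1 + R ^ 2) / (2 * a) * (1 + ‖x‖ ^ 2) := by rw [hC2]; ring
    have l6 : 0 ≤ (1 + R ^ 2) / (2 * a) * (1 + ‖x‖ ^ 2) := by positivity
    rw [abs_le]
    constructor
    · linarith [neg_abs_le (Real.log Pb), abs_nonneg (Real.log C1)]
    · linarith [le_abs_self (Real.log C1), abs_nonneg (Real.log Pb)]
  · refine (hG1 i).trans (mul_le_mul_of_nonneg_right (le_trans ?_ (hCW C3 (by linarith))) hu.le)
    rw [hC3, div_mul_eq_mul_div]
    gcongr
    nlinarith [sq_nonneg (‖x‖ - 1), mul_nonneg hR (sq_nonneg ‖x‖)]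
  · refine (pow_le_pow_left₀ (abs_nonneg _) (hG1 i) 2).trans ?_
    rw [mul_pow]
    refine mul_le_mul_of_nonneg_right (le_trans ?_ (hCW C4 (by linarith))) (by positivity)
    rw [hC4, div_mul_eq_mul_div, div_pow, div_le_div_iff₀ (by positivity) (by positivity)]
    have := mul_le_mul_of_nonneg_right hxR (by positivity : 0 ≤ 2 * a ^ 2)
    refine this.trans (le_of_eq ?_)
    ring
  · refine (hG2 i).trans (mul_le_mul_of_nonneg_right (le_trans ?_ (hCW (C4 + C5) (by linarith))) hu.le)
    rw [add_mul]
    refine add_le_add ?_ (le_mul_of_one_le_right hC5' hW)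
    rw [hC4, div_mul_eq_mul_div, div_le_div_iff₀ (by positivity) (by positivity)]
    have := mul_le_mul_of_nonneg_right hxR (by positivity : 0 ≤ 2 * a ^ 2)
    refine this.trans (le_of_eq ?_)
    ring

end HeatAux

namespace HeatAux
variable {n : ℕ} {f : EE n → ℝ} {R : ℝ}

lemma Dat.cv_hasFDerivAt (h : Dat f R) {k : EE n → ℝ} (hk : ContDiff ℝ 1 k) (x : EE n) :
    HasFDerivAt (cv f k) (∫ y, f y • fderiv ℝ k (x - y)) x := by
  have hk' : Continuous (fderiv ℝ k) := hk.continuous_fderiv one_ne_zero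
  obtain ⟨M, hM⟩ := (isCompact_closedBall (0 : EE n) (‖x‖ + 1 + R)).exists_bound_of_continuousOn
    hk'.continuousOn
  have hfc := h.cont
  have hkc := hk.continuous
  refine hasFDerivAt_integral_of_dominated_of_fderiv_le (F := fun x y => f y * k (x - y))
    (F' := fun x y => f y • fderiv ℝ k (x - y)) (bound := fun y => |f y| * M)
    (Metric.ball_mem_nhds x one_pos) ?_ (h.cvint hk.continuous x) ?_ ?_ ?_ ?_
  · exact Filter.Eventually.of_forall fun z => (h.cvint hk.continuous z).aestronglyMeasurable
  · exact (by fun_prop : Continuous _).aestronglyMeasurable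
  · refine Filter.Eventually.of_forall fun y z hz => ?_
    rw [norm_smul, Real.norm_eq_abs]
    by_cases hy : f y = 0
    · simp [hy]
    · refine mul_le_mul_of_nonneg_left (hM _ ?_) (abs_nonneg _)
      rw [mem_closedBall_zero_iff]
      have h1 := h.bd y hy
      have h2 := norm_sub_le z y
      have h3 : ‖z‖ ≤ ‖x‖ + 1 := by
        rw [mem_ball_iff_norm] at hz
        have := norm_add_le (z - x) x
        rw [sub_add_cancel] at this
        linarith
      linarith
  · exact h.fint.abs.mul_const M
  · refine Filter.Eventually.of_forall fun y z _ => ?_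
    have h1 : HasFDerivAt k (fderiv ℝ k (z - y)) (z - y) :=
      (hk.differentiable one_ne_zero _).hasFDerivAt
    have h2 : HasFDerivAt (fun z => k (z - y)) (fderiv ℝ k (z - y)) z := by
      have h3 := h1.comp z ((hasFDerivAt_id z).sub_const y)
      rwa [ContinuousLinearMap.comp_id] at h3
    exact h2.const_mul (f y)

lemma Dat.cv_fderiv_apply (h : Dat f R) {k k' : EE n → ℝ} (hk : ContDiff ℝ 1 k) (v : EE n)
    (hkk : ∀ x, fderiv ℝ k x v = k' x) (x : EE n) : fderiv ℝ (cv f k) x v = cv f k' x := by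
  have hk' : Continuous (fderiv ℝ k) := hk.continuous_fderiv one_ne_zero
  have hfc := h.cont
  rw [(h.cv_hasFDerivAt hk x).fderiv, ContinuousLinearMap.integral_apply, cv_apply]
  · simp [hkk]
  · refine Continuous.integrable_of_hasCompactSupport (by fun_prop) ?_
    exact h.supp.smul_right

lemma Dat.u_diff (h : Dat f R) (t : ℝ) (x : EE n) : DifferentiableAt ℝ (cv f (G t)) x :=
  (h.cv_hasFDerivAt (G_contDiff t) x).differentiableAt

lemma Dat.u_fderiv (h : Dat f R) {t : ℝ} (ht : 0 < t) (i : Fin n) (x : EE n) :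
    fderiv ℝ (cv f (G t)) x (ev i) = cv f (G1 i t) x :=
  h.cv_fderiv_apply (G_contDiff t) _ (G_fderiv i ht) x

lemma Dat.d_line (h : Dat f R) {t : ℝ} (ht : 0 < t) (i : Fin n) (x : EE n) :
    HasLineDerivAt ℝ (cv f (G1 i t)) (cv f (G2 i t) x) x (ev i) := by
  have h1 := (h.cv_hasFDerivAt (G1_contDiff i t) x).differentiableAt.hasFDerivAt.hasLineDerivAt (ev i)
  rwa [h.cv_fderiv_apply (G1_contDiff i t) _ (G1_fderiv i ht) x] at h1

lemma Dat.log_fderiv (h : Dat f R) {t : ℝ} (ht : 0 < t) (i : Fin n) (x : EE n) :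
    fderiv ℝ (fun y => Real.log (cv f (G t) y)) x (ev i) = cv f (G1 i t) x / cv f (G t) x := by
  rw [fderiv.log (h.u_diff t x) (h.pos ht x).ne']
  simp only [_root_.smul_apply, smul_eq_mul, h.u_fderiv ht]
  ring

lemma Dat.log_line (h : Dat f R) {t : ℝ} (ht : 0 < t) (i : Fin n) (x : EE n) :
    HasLineDerivAt ℝ (fun y => Real.log (cv f (G t) y) + 1) (cv f (G1 i t) x / cv f (G t) x) x (ev i) := by
  have h1 := (((h.u_diff t x).log (h.pos ht x).ne').hasFDerivAt.add_const 1).hasLineDerivAt (ev i)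
  rwa [h.log_fderiv ht] at h1

lemma Dat.grad_sq (h : Dat f R) {t : ℝ} (ht : 0 < t) (x : EE n) :
    ‖gradient (fun y => Real.log (cv f (G t) y)) x‖ ^ 2 * cv f (G t) x =
      ∑ i, cv f (G1 i t) x ^ 2 / cv f (G t) x := by
  have hd := ((h.u_diff t x).log (h.pos ht x).ne').hasGradientAt
  have hi : ∀ i, (gradient (fun y => Real.log (cv f (G t) y)) x) i =
      cv f (G1 i t) x / cv f (G t) x := fun i => by
    rw [← h.log_fderiv ht, hd.hasFDerivAt.fderiv, InnerProductSpace.toDual_apply_apply,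
      EuclideanSpace.inner_single_right]
    simp
  rw [EuclideanSpace.real_norm_sq_eq, Finset.sum_mul]
  refine Finset.sum_congr rfl fun i _ => ?_
  rw [hi]
  have := (h.pos ht x).ne'
  field_simp

/-- time derivative of the kernel -/
noncomputable def Lap (t : ℝ) (z : EE n) : ℝ := (‖z‖ ^ 2 / (4 * t ^ 2) - n / (2 * t)) * G t z

lemma Lap_eq (t : ℝ) (z : EE n) : Lap t z = ∑ i, G2 i t z := by
  simp only [Lap, G2]
  rw [← Finset.sum_mul, Finset.sum_sub_distrib, ← Finset.sum_div, ← EuclideanSpace.real_norm_sq_eq]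
  simp
  left; ring

lemma Lap_cont (t : ℝ) : Continuous (Lap t : EE n → ℝ) := by
  have := G_cont (n := n) t
  unfold Lap; fun_prop

lemma G_time {t : ℝ} (ht : 0 < t) (z : EE n) : HasDerivAt (fun t => G t z) (Lap t z) t := by
  unfold G
  have h1 : HasDerivAt (fun t : ℝ => (4 * π * t) ^ (-(n : ℝ) / 2))
      ((4 * π) * (-(n : ℝ) / 2) * (4 * π * t) ^ (-(n : ℝ) / 2 - 1)) t := by
    have := (((hasDerivAt_id t).const_mul (4 * π))).rpow_const (p := -(n : ℝ) / 2)
      (Or.inl (by simp; positivity))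
    simpa using this
  have h2 : HasDerivAt (fun t : ℝ => -‖z‖ ^ 2 / (4 * t)) (‖z‖ ^ 2 / (4 * t ^ 2)) t := by
    have := (((hasDerivAt_id t).const_mul 4).inv (by simp; positivity)).const_mul (-‖z‖ ^ 2)
    refine (this.congr_deriv ?_)
    simp; field_simp
  refine (h1.mul h2.exp).congr_deriv ?_
  rw [Real.rpow_sub_one (by positivity)]
  simp only [Lap, G]
  field_simp
  ring

lemma Dat.u_time (h : Dat f R) {t : ℝ} (ht : 0 < t) (x : EE n) :
    HasDerivAt (fun t => cv f (G t) x) (∑ i, cv f (G2 i t) x) t := by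
  have e : ∑ i, cv f (G2 i t) x = ∫ y, f y * Lap t (x - y) := by
    simp_rw [cv_apply, Lap_eq, Finset.mul_sum]
    rw [integral_finsetSum]
    intro i _
    exact h.cvint (G2_cont i t) x
  rw [e]
  have hfc := h.cont
  refine (hasDerivAt_integral_of_dominated_loc_of_deriv_le
    (F := fun t y => f y * G t (x - y)) (F' := fun t y => f y * Lap t (x - y))
    (bound := fun y => f y * ((‖x - y‖ ^ 2 / (4 * (t / 2) ^ 2) + n / (2 * (t / 2))) *
      (4 * π * (t / 2)) ^ (-(n : ℝ) / 2)))
    (Ioi_mem_nhds (half_lt_self ht)) ?_ (h.cvint (G_cont t) x)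
    (h.cvint (Lap_cont t) x).aestronglyMeasurable ?_ ?_ ?_).2
  · exact Filter.Eventually.of_forall fun s => (h.cvint (G_cont s) x).aestronglyMeasurable
  · refine Filter.Eventually.of_forall fun y s hs => ?_
    have hs' : t / 2 ≤ s := le_of_lt hs
    have hs0 : 0 < s := by linarith
    rw [Real.norm_eq_abs, abs_mul, abs_of_nonneg (h.nonneg y)]
    refine mul_le_mul_of_nonneg_left ?_ (h.nonneg y)
    rw [Lap, abs_mul, abs_of_pos (G_pos hs0 _)]
    refine mul_le_mul ?_ ?_ (G_pos hs0 _).le (by positivity)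
    · refine (abs_sub _ _).trans ?_
      rw [abs_of_nonneg (by positivity), abs_of_nonneg (by positivity)]
      gcongr
    · unfold G
      have hnr : -(n : ℝ) / 2 ≤ 0 := by
        have : (0:ℝ) ≤ n := Nat.cast_nonneg n
        linarith
      have e1 : (4 * π * s) ^ (-(n : ℝ) / 2) ≤ (4 * π * (t / 2)) ^ (-(n : ℝ) / 2) :=
        Real.rpow_le_rpow_of_nonpos (by positivity) (by gcongr) hnr
      have e2 : Real.exp (-‖x - y‖ ^ 2 / (4 * s)) ≤ 1 := Real.exp_le_one_iff.2 (by
        rw [neg_div]; have : 0 ≤ ‖x - y‖ ^ 2 / (4 * s) := by positivity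
        linarith)
      calc _ ≤ (4 * π * (t / 2)) ^ (-(n : ℝ) / 2) * 1 := by gcongr
        _ = _ := mul_one _
  · exact Continuous.integrable_of_hasCompactSupport (by fun_prop) h.supp.mul_right
  · refine Filter.Eventually.of_forall fun y s hs => ?_
    have hs0 : 0 < s := (half_pos ht).trans hs
    exact (G_time hs0 (x - y)).const_mul (f y)

end HeatAux

namespace HeatAux
variable {n : ℕ} {f : EE n → ℝ} {R : ℝ}

lemma heatSol_eq (f : EE n → ℝ) (t : ℝ) : heatSol n f t = cv f (G t) := by
  funext x
  rw [cv_apply]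
  refine integral_congr_ae (Filter.Eventually.of_forall fun y => ?_)
  simp only [G]; ring

lemma Dat.log_cont (h : Dat f R) {t : ℝ} (ht : 0 < t) :
    Continuous (fun x => Real.log (cv f (G t) x)) :=
  (h.cv_cont (G_cont t)).log fun x => (h.pos ht x).ne'

lemma Dat.u_int (h : Dat f R) {t : ℝ} (ht : 0 < t) : Integrable (cv f (G t)) :=
  h.fint.integrable_convolution _ (G_int ht)

lemma Dat.u_integral (h : Dat f R) {t : ℝ} (ht : 0 < t) : ∫ x, cv f (G t) x = 1 := by
  rw [cv, integral_convolution _ h.fint (G_int ht), h.int, G_integral ht]; simp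

lemma Dat.d_int (h : Dat f R) {t : ℝ} (ht : 0 < t) (i : Fin n) : Integrable (cv f (G1 i t)) :=
  h.fint.integrable_convolution _ (G1_int i ht)

/-- bounding helper -/
lemma bound_aux {C c A g u : ℝ} {x : EE n} (hA : 0 ≤ A)
    (hu : u ≤ C * Real.exp (-(c * ‖x‖ ^ 2))) (hg : |g| ≤ A * (1 + ‖x‖ ^ 2) ^ 2 * u) :
    |g| ≤ (A * C) * ((1 + ‖x‖ ^ 2) ^ 2 * Real.exp (-(c * ‖x‖ ^ 2))) := by
  refine hg.trans ((mul_le_mul_of_nonneg_left hu (by positivity)).trans (le_of_eq ?_))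
  ring

lemma Dat.q_int (h : Dat f R) {t : ℝ} (ht : 0 < t) (i : Fin n) :
    Integrable (fun x => cv f (G1 i t) x ^ 2 / cv f (G t) x) := by
  obtain ⟨C, c, hC, hc, hb⟩ := h.unif ht le_rfl
  refine int_of_bound hc (C := C * C) ?_ fun x => ?_
  · exact (((h.cv_cont (G1_cont i t)).pow 2).div (h.cv_cont (G_cont t))
      fun x => (h.pos ht x).ne').aestronglyMeasurable
  · obtain ⟨b1, b2, b3, b4, b5⟩ := hb t le_rfl le_rfl x
    have hu := h.pos ht x
    refine bound_aux hC b1 ?_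
    rw [abs_div, abs_pow, abs_of_pos hu, div_le_iff₀ hu]
    refine (b4 i).trans ?_
    have := w_le_w x
    calc C * (1 + ‖x‖ ^ 2) * cv f (G t) x ^ 2 ≤ C * (1 + ‖x‖ ^ 2) ^ 2 * cv f (G t) x ^ 2 := by gcongr
      _ = _ := by ring

lemma Dat.fisher_eq (h : Dat f R) {t : ℝ} (ht : 0 < t) :
    fisherInfo n f t = ∑ i, ∫ x, cv f (G1 i t) x ^ 2 / cv f (G t) x := by
  unfold fisherInfo
  simp only [heatSol_eq]
  simp_rw [h.grad_sq ht]
  rw [integral_finsetSum]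
  exact fun i _ => h.q_int ht i

lemma Dat.ibp_u (h : Dat f R) {t : ℝ} (ht : 0 < t) (i : Fin n) :
    Integrable (fun x => (Real.log (cv f (G t) x) + 1) * cv f (G2 i t) x) ∧
    ∫ x, (Real.log (cv f (G t) x) + 1) * cv f (G2 i t) x =
      - ∫ x, cv f (G1 i t) x ^ 2 / cv f (G t) x := by
  obtain ⟨C, c, hC, hc, hb⟩ := h.unif ht le_rfl
  have hlog : ∀ x, |Real.log (cv f (G t) x) + 1| ≤ (C + 1) * (1 + ‖x‖ ^ 2) := fun x => by
    obtain ⟨b1, b2, b3, b4, b5⟩ := hb t le_rfl le_rfl x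
    refine (abs_add_le _ _).trans ?_
    rw [abs_one]
    nlinarith [sq_nonneg ‖x‖]
  have key : ∀ g : EE n → ℝ, Continuous g → (∀ x, |g x| ≤ C * (1 + ‖x‖ ^ 2) * cv f (G t) x) →
      Integrable (fun x => (Real.log (cv f (G t) x) + 1) * g x) := by
    intro g hg hgb
    refine int_of_bound hc (C := ((C + 1) * C) * C)
      (((h.log_cont ht).add continuous_const).mul hg).aestronglyMeasurable fun x => ?_
    refine bound_aux (by positivity) (hb t le_rfl le_rfl x).1 ?_
    rw [abs_mul]
    have hu := h.pos ht x
    calc _ ≤ ((C + 1) * (1 + ‖x‖ ^ 2)) * (C * (1 + ‖x‖ ^ 2) * cv f (G t) x) :=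
          mul_le_mul (hlog x) (hgb x) (abs_nonneg _) (by positivity)
      _ = _ := by ring
  have i2 := key _ (h.cv_cont (G2_cont i t)) fun x => (hb t le_rfl le_rfl x).2.2.2.2 i
  refine ⟨i2, ?_⟩
  have e : ∀ x, cv f (G1 i t) x / cv f (G t) x * cv f (G1 i t) x =
      cv f (G1 i t) x ^ 2 / cv f (G t) x := fun x => by ring
  have := ibp (ev i) (a := fun x => Real.log (cv f (G t) x) + 1)
    (a' := fun x => cv f (G1 i t) x / cv f (G t) x) (b := cv f (G1 i t)) (b' := cv f (G2 i t))
    (by simp_rw [e]; exact h.q_int ht i) i2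
    (key _ (h.cv_cont (G1_cont i t)) fun x => (hb t le_rfl le_rfl x).2.2.1 i)
    (h.log_line ht i) (h.d_line ht i)
  rw [this]
  simp_rw [e]

lemma Dat.deBruijn (h : Dat f R) {t : ℝ} (ht : 0 < t) :
    HasDerivAt (shannonEntropy n f) (fisherInfo n f t) t := by
  have hS : shannonEntropy n f = fun t => -∫ x, cv f (G t) x * Real.log (cv f (G t) x) := by
    funext s; simp only [shannonEntropy, heatSol_eq]
  have hI : fisherInfo n f t =
      -∫ x, (∑ i, cv f (G2 i t) x) * (Real.log (cv f (G t) x) + 1) := by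
    have e : ∀ x, (∑ i, cv f (G2 i t) x) * (Real.log (cv f (G t) x) + 1) =
      ∑ i, (Real.log (cv f (G t) x) + 1) * cv f (G2 i t) x := fun x => by
      rw [Finset.sum_mul]; exact Finset.sum_congr rfl fun i _ => mul_comm _ _
    simp_rw [e]
    rw [integral_finsetSum _ fun i _ => (h.ibp_u ht i).1, h.fisher_eq ht, ← Finset.sum_neg_distrib]
    refine Finset.sum_congr rfl fun i _ => ?_
    rw [(h.ibp_u ht i).2, neg_neg]
  rw [hS, hI]
  obtain ⟨C, c, hC, hc, hb⟩ := h.unif (half_pos ht) (by linarith : t / 2 ≤ 2 * t)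
  have hucont : ∀ s, Continuous (cv f (G s)) := fun s => h.cv_cont (G_cont s)
  refine HasDerivAt.neg ?_
  refine (hasDerivAt_integral_of_dominated_loc_of_deriv_le
    (F := fun t x => cv f (G t) x * Real.log (cv f (G t) x))
    (F' := fun t x => (∑ i, cv f (G2 i t) x) * (Real.log (cv f (G t) x) + 1))
    (bound := fun x => ((n * C * (C + 1)) * C) * ((1 + ‖x‖ ^ 2) ^ 2 * Real.exp (-(c * ‖x‖ ^ 2))))
    (Ioo_mem_nhds (half_lt_self ht) (by linarith : t < 2 * t)) ?_ ?_ ?_ ?_ (weight_int hc _) ?_).2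
  · filter_upwards [Ioi_mem_nhds ht] with s hs
    exact ((hucont s).mul (h.log_cont hs)).aestronglyMeasurable
  · refine int_of_bound hc (C := C * C) ((hucont t).mul (h.log_cont ht)).aestronglyMeasurable
      fun x => ?_
    obtain ⟨b1, b2, b3, b4, b5⟩ := hb t (by linarith) (by linarith) x
    refine bound_aux hC b1 ?_
    have hu := h.pos ht x
    rw [abs_mul, abs_of_pos hu, mul_comm]
    refine mul_le_mul_of_nonneg_right (b2.trans ?_) hu.le
    exact mul_le_mul_of_nonneg_left (w_le_w x) hC
  · refine Continuous.aestronglyMeasurable ?_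
    exact (continuous_finsetSum _ fun i _ => h.cv_cont (G2_cont i t)).mul
      ((h.log_cont ht).add continuous_const)
  · refine Filter.Eventually.of_forall fun x s hs => ?_
    obtain ⟨b1, b2, b3, b4, b5⟩ := hb s hs.1.le hs.2.le x
    have hs0 : 0 < s := (half_pos ht).trans hs.1
    have hu := h.pos hs0 x
    rw [Real.norm_eq_abs]
    refine bound_aux (by positivity) b1 ?_
    rw [abs_mul]
    have hsum : |∑ i, cv f (G2 i s) x| ≤ n * (C * (1 + ‖x‖ ^ 2) * cv f (G s) x) := by
      refine (Finset.abs_sum_le_sum_abs _ _).trans ?_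
      refine (Finset.sum_le_sum fun i _ => b5 i).trans (le_of_eq ?_)
      simp
    have hlog : |Real.log (cv f (G s) x) + 1| ≤ (C + 1) * (1 + ‖x‖ ^ 2) := by
      refine (abs_add_le _ _).trans ?_
      rw [abs_one]
      nlinarith [sq_nonneg ‖x‖]
    calc _ ≤ n * (C * (1 + ‖x‖ ^ 2) * cv f (G s) x) * ((C + 1) * (1 + ‖x‖ ^ 2)) :=
          mul_le_mul hsum hlog (abs_nonneg _) (by positivity)
      _ = _ := by ring
  · refine Filter.Eventually.of_forall fun x s hs => ?_
    have hs0 : 0 < s := (half_pos ht).trans hs.1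
    have h1 := h.u_time hs0 x
    have hu := (h.pos hs0 x).ne'
    refine (h1.mul (h1.log hu)).congr_deriv ?_
    field_simp

lemma Dat.stam (h : Dat f R) {s τ : ℝ} (hs : 0 < s) (hτ : 0 < τ) (lam : ℝ) :
    fisherInfo n f (s + τ) ≤ lam ^ 2 * fisherInfo n f s + (1 - lam) ^ 2 * (n / (2 * τ)) := by
  rw [h.fisher_eq hs, h.fisher_eq (by positivity)]
  have e0 : cv (cv f (G s)) (G τ) = cv f (G (s + τ)) := by
    rw [cv_assoc h.cont h.supp (G_cont s) (G_cont τ) (G_int hs) (G_int hτ), cv_GG hs hτ]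
  have e : ∀ i : Fin n, ∫ x, cv f (G1 i (s + τ)) x ^ 2 / cv f (G (s + τ)) x ≤
      lam ^ 2 * (∫ x, cv f (G1 i s) x ^ 2 / cv f (G s) x) + (1 - lam) ^ 2 * (1 / (2 * τ)) := by
    intro i
    have := stam_coord i hτ lam (u := cv f (G s)) (d := cv f (G1 i s)) (D := cv f (G1 i (s + τ)))
      (h.pos hs) (h.u_int hs) (h.u_integral hs) (h.d_int hs i) (h.q_int hs i)
      (fun x => by rw [e0]; exact h.pos (by positivity) x)
      (by rw [cv_assoc h.cont h.supp (G_cont s) (G1_cont i τ) (G_int hs) (G1_int i hτ),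
            cv_GG1 i hs hτ])
      (by rw [cv_assoc h.cont h.supp (G1_cont i s) (G_cont τ) (G1_int i hs) (G_int hτ),
            cv_G1G i hs hτ])
    rwa [e0] at this
  refine (Finset.sum_le_sum fun i _ => e i).trans (le_of_eq ?_)
  rw [Finset.sum_add_distrib, ← Finset.mul_sum]
  simp
  ring

lemma Dat.fisher_nonneg (h : Dat f R) {t : ℝ} (ht : 0 < t) : 0 ≤ fisherInfo n f t := by
  rw [h.fisher_eq ht]
  refine Finset.sum_nonneg fun i _ => integral_nonneg fun x => ?_
  have := h.pos ht x
  simp only [Pi.zero_apply]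
  positivity

lemma Dat.stam' (hn : 1 ≤ n) (h : Dat f R) {s r : ℝ} (hs : 0 < s) (hr : s < r) :
    fisherInfo n f r ≤ fisherInfo n f s / (1 + 2 / n * (r - s) * fisherInfo n f s) := by
  have hn' : (0 : ℝ) < n := by exact_mod_cast hn
  have hτ : 0 < r - s := by linarith
  have ha := h.fisher_nonneg hs
  set a := fisherInfo n f s
  set τ := r - s
  have hden : 0 < 1 + 2 / n * τ * a := by positivity
  have := h.stam hs hτ (1 / (1 + 2 / n * τ * a))
  rw [show s + τ = r by simp [τ]] at this
  refine this.trans (le_of_eq ?_)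
  field_simp
  ring

end HeatAux

open HeatAux

/-- Linear growth bound for the entropy power on `ℝⁿ`:
`N(u(t)) - N(u(s)) ≤ (t-s)·(2/n)·I(u(s))·N(u(s))` for `0 < s ≤ t`. -/
theorem entropy_power_linear_growth (n : ℕ) (hn : 1 ≤ n)
    (f : EuclideanSpace ℝ (Fin n) → ℝ)
    (hf_cont : Continuous f) (hf_nonneg : ∀ x, 0 ≤ f x)
    (hf_supp : HasCompactSupport f)
    (hf_int : ∫ x, f x = 1) :
    ∀ s t : ℝ, 0 < s → s ≤ t →
      entropyPower n f t - entropyPower n f s ≤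
        (t - s) * (2 / (n : ℝ)) * fisherInfo n f s * entropyPower n f s := by
  intro s t hs hst
  obtain ⟨R, h⟩ := exists_dat hf_cont hf_nonneg hf_supp hf_int
  have hn' : (0 : ℝ) < n := by exact_mod_cast hn
  have ha := h.fisher_nonneg hs
  set a := fisherInfo n f s with hadef
  have hpos : ∀ r, s ≤ r → 0 < 1 + 2 / n * (r - s) * a := fun r hr => by
    have : 0 ≤ r - s := by linarith
    positivity
  have hder : ∀ r, s ≤ r → HasDerivAt
      (fun r => shannonEntropy n f r - n / 2 * Real.log (1 + 2 / n * (r - s) * a))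
      (fisherInfo n f r - a / (1 + 2 / n * (r - s) * a)) r := fun r hr => by
    have h1 := h.deBruijn (hs.trans_le hr)
    have h2 : HasDerivAt (fun r => 1 + 2 / n * (r - s) * a) (2 / n * a) r := by
      have := ((((hasDerivAt_id r).sub_const s).const_mul (2 / (n : ℝ))).mul_const a).const_add 1
      simpa using this
    refine (h1.sub ((h2.log (hpos r hr).ne').const_mul (n / 2 : ℝ))).congr_deriv ?_
    congr 1
    have := (hpos r hr).ne'
    field_simp
  have hanti : AntitoneOn
      (fun r => shannonEntropy n f r - n / 2 * Real.log (1 + 2 / n * (r - s) * a)) (Set.Ici s) := by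
    refine antitoneOn_of_deriv_nonpos (convex_Ici s)
      (fun r hr => (hder r hr).continuousAt.continuousWithinAt)
      (fun r hr => ?_) fun r hr => ?_
    · rw [interior_Ici] at hr
      exact (hder r (le_of_lt hr)).differentiableAt.differentiableWithinAt
    · rw [interior_Ici] at hr
      rw [(hder r (le_of_lt hr)).deriv]
      linarith [h.stam' hn hs hr]
  have hfin := hanti (Set.mem_Ici.2 le_rfl) (Set.mem_Ici.2 hst) hst
  simp only [sub_self, mul_zero, zero_mul, add_zero, Real.log_one, sub_zero] at hfin
  have hN : entropyPower n f t ≤ entropyPower n f s * (1 + 2 / n * (t - s) * a) := by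
    unfold entropyPower
    rw [← Real.exp_log (hpos t hst), ← Real.exp_add]
    refine Real.exp_le_exp.2 ?_
    have h2n : 0 < 2 / (n : ℝ) := by positivity
    have := mul_le_mul_of_nonneg_left hfin h2n.le
    have e : 2 / (n : ℝ) * (n / 2 * Real.log (1 + 2 / n * (t - s) * a)) =
      Real.log (1 + 2 / n * (t - s) * a) := by field_simp
    rw [mul_sub, e] at this
    linarith
  linarith
end
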